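/- At the Cauchy point (μ,σ,α,β) = (0,1,1,0), the Fisher information entries I_{θiθj} = π∫_ℝ (1 + x²)·f_{θi}(x)·f_{θj}(x) dx take the exact values: I_{μμ} = I_{σσ} = 1/2; I_{αα} = (1/2){π²/6 + (γ + log 2 − 1)²} where γ is Euler's constant; I_{ββ} = (2/π²){π²/6 + (γ + log 2 − 1)²}; I_{σα} = (1/2)(1 − γ − log 2); I_{μβ} = (1/π)(γ + log 2 − 1); and I_{μσ} = I_{μα} = I_{αβ} = I_{σβ} = 0. -/

import Mathlib

open MeasureTheory

noncomputable section

/-- Cumulant derivatives `ψ_μ, ψ_σ, ψ_α, ψ_β` of the (M₀) parameterization at the Cauchy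
point `(μ,σ,α,β) = (0,1,1,0)` (the `α`- and `β`-derivatives being limits as `α → 1` of the
`α ≠ 1` expressions): `ψ_μ(t) = it`, `ψ_σ(t) = −|t|`, `ψ_α(t) = −|t| log|t|`,
`ψ_β(t) = −i(2/π) t log|t|`. -/
def psiC (i : Fin 4) (t : ℝ) : ℂ :=
  if i = 0 then Complex.I * (t : ℂ)
  else if i = 1 then ((-|t| : ℝ) : ℂ)
  else if i = 2 then ((-(|t| * Real.log |t|) : ℝ) : ℂ)
  else -Complex.I * ((2 / Real.pi * t * Real.log |t| : ℝ) : ℂ)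

/-- Parameter derivatives of the (M₀) stable density at the Cauchy point, via the inversion
formula `f_{θᵢ}(x) = (1/2π) ∫ e^{−itx} ψ_{θᵢ}(t) e^{−|t|} dt`. -/
def fPc (i : Fin 4) (x : ℝ) : ℝ :=
  (1 / (2 * Real.pi)) *
    (∫ t : ℝ, Complex.exp (-Complex.I * (t : ℂ) * (x : ℂ)) * psiC i t *
      Complex.exp (((-|t| : ℝ) : ℂ))).re

/-- Fisher information entries at the Cauchy point:
`I_{θᵢθⱼ} = π ∫ (1 + x²) f_{θᵢ}(x) f_{θⱼ}(x) dx`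
(using that the Cauchy density is `1/(π(1+x²))`). -/
def IC (i j : Fin 4) : ℝ := Real.pi * ∫ x : ℝ, (1 + x ^ 2) * fPc i x * fPc j x

end

/-!
For `t > 0` the cumulant derivatives are `ψᵢ(t) = cᵢ t (log t)ⁿ` with `n ∈ {0, 1}`, and they are
Hermitian. The inversion integral is therefore twice the real part of a Laplace transform at
`s = 1 + ix`, namely `cᵢ w(s)ⁿ / s²` with `w(s) = digamma 2 - log s`. Dividing by the Cauchy
density turns `s⁻²` into the unimodular factor `z(s) = (2 - s) / s`, so the `i`-th score is the real
part of the boundary value of the holomorphic function `cᵢ z wⁿ` on `re s > 1`.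

Under the Cauchy law, the boundary values of a holomorphic function of slow growth have as mean its
value at `s = 2`, where `z` vanishes. In `re a · re b = ½ re (a b) + ½ re (a b̄)` the first term
thus has mean zero, and `Iᵢⱼ = ½ re (cᵢ c̄ⱼ E[wⁿ w̄ᵐ])`. Finally `E[w] = w(2) = 1 - γ - log 2`,
while `|w|² = re w² + 2 arctan² x` together with `E[w²] = w(2)²` and `E[arctan²] = π² / 12` gives
`E[|w|²]`.
-/

section LaplaceTransform

open Complex Set Filter Topology

theorem norm_cexp_neg_mul_ofReal (r : ℂ) (t : ℝ) : ‖cexp (-(r * t))‖ = Real.exp (-r.re * t) := by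
  simp [norm_exp]

variable {a r : ℂ}

theorem isBigO_cexp_neg_mul_atTop (r : ℂ) :
    (fun t : ℝ => cexp (-(r * t))) =O[atTop] fun t => Real.exp (-r.re * t) :=
  .of_bound 1 (.of_forall fun t => by simp [norm_cexp_neg_mul_ofReal])

theorem isBigO_cexp_neg_mul_nhdsGT_zero (r : ℂ) :
    (fun t : ℝ => cexp (-(r * t))) =O[𝓝[>] 0] fun t => t ^ (-(0 : ℝ)) := by
  have hcont : Continuous fun t : ℝ => cexp (-(r * t)) := by fun_prop
  simpa using (hcont.tendsto 0).isBigO_one ℝ |>.mono nhdsWithin_le_nhds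

theorem locallyIntegrableOn_cexp_neg_mul (r : ℂ) (s : Set ℝ) :
    LocallyIntegrableOn (fun t : ℝ => cexp (-(r * t))) s :=
  (by fun_prop : Continuous fun t : ℝ => cexp (-(r * t))).locallyIntegrable.locallyIntegrableOn _

theorem mellinConvergent_cexp_neg_mul (ha : 0 < a.re) (hr : 0 < r.re) :
    MellinConvergent (fun t : ℝ => cexp (-(r * t))) a :=
  mellinConvergent_of_isBigO_rpow_exp hr (locallyIntegrableOn_cexp_neg_mul r _)
    (isBigO_cexp_neg_mul_atTop r) (isBigO_cexp_neg_mul_nhdsGT_zero r) ha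

theorem hasDerivAt_mellin_cexp_neg_mul (ha : 0 < a.re) (hr : 0 < r.re) :
    HasDerivAt (fun r : ℂ => mellin (fun t : ℝ => cexp (-(r * t))) a)
      (-mellin (fun t : ℝ => cexp (-(r * t))) (a + 1)) r := by
  have hδ : 0 < ((r.re / 2 : ℝ) : ℂ).re := by simpa using hr
  have ha₁ : 0 < (a + 1).re := by rw [add_re, one_re]; positivity
  have hF' (z : ℂ) (t : ℝ) (ht : t ∈ Ioi (0 : ℝ)) :
      (t : ℂ) ^ (a - 1) • (cexp (-(z * t)) * -t) = -((t : ℂ) ^ (a + 1 - 1) • cexp (-(z * t))) := by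
    rw [add_sub_right_comm, cpow_add _ _ (ofReal_ne_zero.2 (ne_of_gt ht)), cpow_one]
    simp only [smul_eq_mul]; ring
  unfold mellin
  rw [← integral_neg, ← setIntegral_congr_fun measurableSet_Ioi (hF' r)]
  refine (hasDerivAt_integral_of_dominated_loc_of_deriv_le (s := {z : ℂ | r.re / 2 < z.re})
    (F := fun z (t : ℝ) => (t : ℂ) ^ (a - 1) • cexp (-(z * t)))
    (F' := fun z (t : ℝ) => (t : ℂ) ^ (a - 1) • (cexp (-(z * t)) * -t))
    (bound := fun t : ℝ => ‖(t : ℂ) ^ (a + 1 - 1) • cexp (-((r.re / 2 : ℝ) * t))‖)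
    ((isOpen_lt continuous_const continuous_re).mem_nhds (half_lt_self hr)) ?_
    (mellinConvergent_cexp_neg_mul ha hr) ?_ ?_ (mellinConvergent_cexp_neg_mul ha₁ hδ).norm ?_).2
  · filter_upwards [(isOpen_lt continuous_const continuous_re).mem_nhds hr] with z hz
    exact (mellinConvergent_cexp_neg_mul ha hz).aestronglyMeasurable
  · exact ((mellinConvergent_cexp_neg_mul ha₁ hr).neg.congr_fun
      (fun t ht => (hF' r t ht).symm) measurableSet_Ioi).aestronglyMeasurable
  · filter_upwards [ae_restrict_mem measurableSet_Ioi] with t ht z (hz : r.re / 2 < z.re)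
    rw [hF' z t ht, norm_neg, norm_smul, norm_smul, norm_cexp_neg_mul_ofReal,
      norm_cexp_neg_mul_ofReal, ofReal_re]
    have : 0 < t := ht
    gcongr
  · refine .of_forall fun t z _ => HasDerivAt.fun_const_smul _ (HasDerivAt.cexp ?_)
    simpa using ((hasDerivAt_id z).mul_const (t : ℂ)).fun_neg

theorem eqOn_re_pos_of_forall_ofReal {f g : ℂ → ℂ} (hf : DifferentiableOn ℂ f {z | 0 < z.re})
    (hg : DifferentiableOn ℂ g {z | 0 < z.re}) (h : ∀ x : ℝ, 0 < x → f x = g x) :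
    EqOn f g {z | 0 < z.re} := by
  have hopen : IsOpen {z : ℂ | 0 < z.re} := isOpen_lt continuous_const continuous_re
  refine (hf.analyticOnNhd hopen).eqOn_of_preconnected_of_frequently_eq (hg.analyticOnNhd hopen)
    (convex_halfSpace_re_gt 0).isPreconnected (z₀ := 1) (by simp) ?_
  have hmap : Tendsto (fun x : ℝ => (x : ℂ)) (𝓝[≠] 1) (𝓝[≠] 1) :=
    tendsto_nhdsWithin_iff.2 ⟨(continuous_ofReal.tendsto' 1 1 rfl).mono_left nhdsWithin_le_nhds,
      by filter_upwards [self_mem_nhdsWithin] with x hx using by simpa using hx⟩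
  refine hmap.frequently (Eventually.frequently ?_)
  filter_upwards [nhdsWithin_le_nhds (lt_mem_nhds one_pos)] with x hx using h x hx

theorem hasMellin_cexp_neg_mul (ha : 0 < a.re) (hr : 0 < r.re) :
    HasMellin (fun t : ℝ => cexp (-(r * t))) a (r ^ (-a) * Gamma a) := by
  refine ⟨mellinConvergent_cexp_neg_mul ha hr, ?_⟩
  refine eqOn_re_pos_of_forall_ofReal
    (f := fun r => mellin (fun t : ℝ => cexp (-(r * t))) a) (g := fun r => r ^ (-a) * Gamma a)
    (fun z hz => (hasDerivAt_mellin_cexp_neg_mul ha hz).differentiableAt.differentiableWithinAt)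
    (fun z hz => ?_) (fun x hx => ?_) hr
  · have hslit : z ∈ slitPlane := .inl hz
    exact DifferentiableAt.differentiableWithinAt (by fun_prop (disch := assumption))
  · have harg : (x : ℂ).arg ≠ Real.pi := by simp [arg_ofReal_of_nonneg hx.le, Real.pi_ne_zero.symm]
    rw [cpow_neg, ← inv_cpow _ _ harg, ← one_div, ← integral_cpow_mul_exp_neg_mul_Ioi ha hx]
    rfl

theorem hasMellin_log_smul_cexp_neg_mul (ha : 0 < a.re) (hr : 0 < r.re) :
    HasMellin (fun t : ℝ => Real.log t • cexp (-(r * t))) a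
      (r ^ (-a) * Gamma a * (digamma a - log r)) := by
  obtain ⟨hconv, hderiv⟩ := mellin_hasDerivAt_of_isBigO_rpow (a := a.re + 1) (b := 0)
    (locallyIntegrableOn_cexp_neg_mul r _)
    ((isBigO_cexp_neg_mul_atTop r).trans (isLittleO_exp_neg_mul_rpow_atTop hr _).isBigO)
    (lt_add_one _) (isBigO_cexp_neg_mul_nhdsGT_zero r) ha
  refine ⟨hconv, ?_⟩
  have hmellin : mellin (fun t : ℝ => cexp (-(r * t))) =ᶠ[𝓝 a] fun b => r ^ (-b) * Gamma b := by
    filter_upwards [(isOpen_lt continuous_const continuous_re).mem_nhds ha] with b hb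
    exact (hasMellin_cexp_neg_mul hb hr).2
  have hr₀ : r ≠ 0 := by rintro rfl; simp at hr
  have hΓ : DifferentiableAt ℂ Gamma a :=
    differentiableAt_Gamma a fun m h => by
      simp only [h, neg_re, natCast_re] at ha; linarith [m.cast_nonneg (α := ℝ)]
  have hprod := ((hasDerivAt_id a).neg.const_cpow (.inl hr₀)).mul hΓ.hasDerivAt
  rw [(hderiv.congr_of_eventuallyEq hmellin.symm).unique hprod, digamma_def, logDeriv_apply]
  simp only [id_eq, Pi.neg_apply]
  field_simp [Gamma_ne_zero_of_re_pos ha]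
  ring

theorem digamma_two : digamma 2 = 1 - Real.eulerMascheroniConstant := by
  rw [← one_add_one_eq_two, digamma_apply_add_one 1 fun m h => ?_, digamma_one]
  · simp [← sub_eq_neg_add]
  · have := congrArg re h
    simp only [one_re, neg_re, natCast_re] at this
    linarith [m.cast_nonneg (α := ℝ)]

end LaplaceTransform
section CauchyMeasure

open ProbabilityTheory Set Real
open scoped NNReal

variable {E : Type*} [NormedAddCommGroup E] [NormedSpace ℝ E]

theorem integral_cauchyMeasure (x₀ : ℝ) {γ : ℝ≥0} (hγ : γ ≠ 0) (f : ℝ → E) :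
    ∫ x, f x ∂cauchyMeasure x₀ γ = ∫ x, cauchyPDFReal x₀ γ x • f x := by
  rw [cauchyMeasure_of_scale_ne_zero x₀ hγ,
    integral_withDensity_eq_integral_toReal_smul (measurable_cauchyPDF x₀ γ)
      (.of_forall fun x => ENNReal.ofReal_lt_top)]
  simp only [cauchyPDF_def, ENNReal.toReal_ofReal (cauchyPDF_pos x₀ hγ _).le]

theorem integrable_cauchyMeasure_iff (x₀ : ℝ) {γ : ℝ≥0} (hγ : γ ≠ 0) {f : ℝ → E} :
    Integrable f (cauchyMeasure x₀ γ) ↔ Integrable fun x => cauchyPDFReal x₀ γ x • f x := by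
  rw [cauchyMeasure_of_scale_ne_zero x₀ hγ,
    integrable_withDensity_iff_integrable_smul' (measurable_cauchyPDF x₀ γ)
      (.of_forall fun x => ENNReal.ofReal_lt_top)]
  simp only [cauchyPDF_def, ENNReal.toReal_ofReal (cauchyPDF_pos x₀ hγ _).le]

theorem cauchyPDFReal_zero_one (x : ℝ) : cauchyPDFReal 0 1 x = π⁻¹ * (1 + x ^ 2)⁻¹ := by
  simp [cauchyPDFReal_def, add_comm]

theorem cauchyPDFReal_add_mul_tan (x₀ : ℝ) {γ : ℝ≥0} (hγ : γ ≠ 0) {θ : ℝ} (hθ : cos θ ≠ 0) :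
    cauchyPDFReal x₀ γ (x₀ + γ * tan θ) = π⁻¹ * (cos θ ^ 2 / γ) := by
  have hγ' : (γ : ℝ) ≠ 0 := by exact_mod_cast hγ
  rw [cauchyPDFReal_def, ← inv_one_add_tan_sq hθ]
  have := (add_pos_of_pos_of_nonneg one_pos (sq_nonneg (tan θ))).ne'
  have h2 : ((x₀ + γ * tan θ - x₀) ^ 2 + γ ^ 2 : ℝ) = γ ^ 2 * (1 + tan θ ^ 2) := by ring
  rw [h2]
  field_simp

theorem integral_cauchyMeasure_eq_integral_tan (x₀ : ℝ) {γ : ℝ≥0} (hγ : γ ≠ 0) (f : ℝ → E) :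
    ∫ x, f x ∂cauchyMeasure x₀ γ = π⁻¹ • ∫ θ in -(π / 2)..π / 2, f (x₀ + γ * tan θ) := by
  have hγ' : (0 : ℝ) < γ := by exact_mod_cast hγ.bot_lt
  have hpi := pi_pos
  have himage : (fun θ => x₀ + γ * tan θ) '' Ioo (-(π / 2)) (π / 2) = univ := by
    rw [← image_image (fun x => x₀ + γ * x), image_tan_Ioo]
    exact image_univ_of_surjective fun y => ⟨(y - x₀) / γ, by field_simp; ring⟩
  have hinj : InjOn (fun θ => x₀ + γ * tan θ) (Ioo (-(π / 2)) (π / 2)) := fun a ha b hb h =>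
    injOn_tan ha hb (mul_left_cancel₀ hγ'.ne' (add_left_cancel h))
  rw [integral_cauchyMeasure x₀ hγ, ← setIntegral_univ, ← himage,
    integral_image_eq_integral_abs_deriv_smul measurableSet_Ioo (fun θ hθ =>
      (((hasDerivAt_tan (cos_pos_of_mem_Ioo hθ).ne').const_mul (γ : ℝ)).const_add
        x₀).hasDerivWithinAt) hinj, ← intervalIntegral.integral_smul,
    intervalIntegral.integral_of_le (by linarith), integral_Ioc_eq_integral_Ioo]
  refine setIntegral_congr_fun measurableSet_Ioo fun θ hθ => ?_
  have hcos := cos_pos_of_mem_Ioo hθ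
  rw [cauchyPDFReal_add_mul_tan x₀ hγ hcos.ne', abs_of_pos (by positivity), smul_smul]
  congr 1
  field_simp

theorem integral_cauchyMeasure_eq_integral_add_mul (x₀ : ℝ) {γ : ℝ≥0} (hγ : γ ≠ 0) (f : ℝ → E) :
    ∫ x, f x ∂cauchyMeasure x₀ γ = ∫ x, f (x₀ + γ * x) ∂cauchyMeasure 0 1 := by
  rw [integral_cauchyMeasure_eq_integral_tan x₀ hγ,
    integral_cauchyMeasure_eq_integral_tan 0 one_ne_zero]
  simp

theorem circleMap_two_mul_eq_cayley_tan {θ : ℝ} (hθ : cos θ ≠ 0) :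
    circleMap 0 1 (2 * θ) = (1 + tan θ * Complex.I) / (1 - tan θ * Complex.I) := by
  have hc : (cos θ : ℂ) ≠ 0 := by exact_mod_cast hθ
  have hnum : 1 + tan θ * Complex.I = Complex.exp (θ * Complex.I) / cos θ := by
    rw [Complex.exp_mul_I, tan_eq_sin_div_cos]; push_cast at hc ⊢; field_simp
  have hden : 1 - tan θ * Complex.I = Complex.exp (-(θ * Complex.I)) / cos θ := by
    rw [← neg_mul, Complex.exp_mul_I, tan_eq_sin_div_cos, Complex.cos_neg, Complex.sin_neg]
    push_cast at hc ⊢; field_simp; ring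
  rw [hnum, hden, div_div_div_cancel_right₀ hc, ← Complex.exp_sub, circleMap_zero]
  push_cast
  rw [one_mul]
  ring_nf

theorem circleAverage_eq_integral_cauchyMeasure (f : ℂ → E) :
    circleAverage f 0 1 =
      ∫ x : ℝ, f ((1 + x * Complex.I) / (1 - x * Complex.I)) ∂cauchyMeasure 0 1 := by
  have hpi := pi_pos
  rw [circleAverage_eq_integral_add (-π), integral_cauchyMeasure_eq_integral_tan 0 one_ne_zero,
    intervalIntegral.integral_comp_add_right (fun θ => f (circleMap 0 1 θ))]
  have hdouble := intervalIntegral.integral_comp_mul_left (a := -(π / 2)) (b := π / 2)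
    (fun θ => f (circleMap 0 1 θ)) two_ne_zero
  rw [show 2 * -(π / 2) = 0 + -π by ring, show 2 * (π / 2) = 2 * π + -π by ring] at hdouble
  rw [mul_inv_rev, mul_smul, ← hdouble]
  congr 1
  refine intervalIntegral.integral_congr_Ioo_of_le (by linarith) fun θ hθ => ?_
  simp only [circleMap_two_mul_eq_cayley_tan (cos_pos_of_mem_Ioo hθ).ne', NNReal.coe_one, one_mul,
    zero_add]

theorem integrable_one_add_abs_rpow_cauchyMeasure {a : ℝ} (ha : a < 1) :
    Integrable (fun x => (1 + |x|) ^ a) (cauchyMeasure 0 1) := by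
  rw [integrable_cauchyMeasure_iff 0 one_ne_zero]
  have hdom : Integrable fun x : ℝ => π⁻¹ * (2 * (1 + |x|) ^ (-(2 - a))) :=
    ((integrable_one_add_norm (by simp; linarith)).const_mul 2).const_mul π⁻¹
  refine hdom.mono' (by fun_prop (disch := measurability)) (.of_forall fun x => ?_)
  have hx : 0 < 1 + |x| := by positivity
  have hinv : (1 + x ^ 2)⁻¹ ≤ 2 * ((1 + |x|) ^ 2)⁻¹ := by
    rw [← div_eq_mul_inv, inv_eq_one_div, div_le_div_iff₀ (by positivity) (by positivity)]
    linarith [add_sq_le (a := 1) (b := |x|), sq_abs x]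
  have hrpow : (1 + |x|) ^ (-(2 - a)) = ((1 + |x|) ^ 2)⁻¹ * (1 + |x|) ^ a := by
    rw [neg_sub, rpow_sub hx, rpow_two, div_eq_inv_mul]
  rw [cauchyPDFReal_zero_one, hrpow, smul_eq_mul, norm_of_nonneg (by positivity), mul_assoc,
    ← mul_assoc 2]
  gcongr

open Complex Filter Topology

theorem re_one_sub_div_one_add_pos {w : ℂ} (hw : ‖w‖ < 1) : 0 < ((1 - w) / (1 + w)).re := by
  have hden : 0 < normSq (1 + w) := normSq_pos.2 fun h => by
    simp [eq_neg_of_add_eq_zero_right h] at hw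
  have hnum : (1 - w).re * (1 + w).re + (1 - w).im * (1 + w).im = 1 - ‖w‖ ^ 2 := by
    rw [← normSq_eq_norm_sq, normSq_apply]
    simp
    ring
  rw [div_re, ← add_div, hnum]
  exact div_pos (by nlinarith [norm_nonneg w]) hden

theorem re_add_mul_I_div_one_add_mul_I_pos {ε : ℝ} (hε : 0 < ε) (x : ℝ) :
    0 < ((ε + x * I) / (1 + ε * x * I)).re := by
  have hden : 0 < normSq (1 + ε * x * I) := normSq_pos.2 fun h => by simpa using congrArg re h
  have hnum : (ε + x * I).re * (1 + ε * x * I).re + (ε + x * I).im * (1 + ε * x * I).im =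
      ε * (1 + x ^ 2) := by
    simp
    ring
  rw [div_re, ← add_div, hnum]
  positivity

theorem norm_add_mul_I_div_one_add_mul_I_le {ε : ℝ} (hε : 0 < ε) (hε₁ : ε ≤ 1) (x : ℝ) :
    ‖(ε + x * I) / (1 + ε * x * I)‖ ≤ 1 + |x| := by
  have hden : 1 ≤ ‖1 + ε * x * I‖ := by
    simpa using abs_re_le_norm (1 + ε * x * I)
  have hnum : ‖ε + x * I‖ ≤ 1 + |x| :=
    (norm_add_le _ _).trans (by simpa [abs_of_pos hε] using hε₁)
  rw [norm_div]
  exact (div_le_self (norm_nonneg _) hden).trans hnum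

section MeanValue

variable {F : Type*} [NormedAddCommGroup F] [NormedSpace ℂ F] [CompleteSpace F] {f : ℂ → F}

-- The points `(ε + ix) / (1 + εix)` trace the Cayley image of the circle of radius
-- `|1 - ε| / (1 + ε) < 1`, a circle in the open half-plane that tends to its boundary as `ε → 0`.
theorem integral_cauchyMeasure_zero_one_eq_of_differentiableOn {ε : ℝ} (hε : 0 < ε)
    (hf : DifferentiableOn ℂ f {z | 0 < z.re}) :
    ∫ x : ℝ, f ((ε + x * I) / (1 + ε * x * I)) ∂cauchyMeasure 0 1 = f 1 := by
  have hopen : IsOpen {z : ℂ | 0 < z.re} := isOpen_lt continuous_const continuous_re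
  set r : ℝ := (1 - ε) / (1 + ε) with hr
  have hr₁ : |r| < 1 := by
    rw [hr, abs_div, div_lt_one (by positivity), abs_of_pos (by positivity : 0 < 1 + ε), abs_lt]
    constructor <;> linarith
  have hnorm {z : ℂ} (hz : ‖z‖ ≤ 1) : ‖r * z‖ < 1 := by
    rw [norm_mul, norm_real, norm_eq_abs]
    exact (mul_le_of_le_one_right (abs_nonneg r) hz).trans_lt hr₁
  have hmean : circleAverage (fun z => f ((1 - r * z) / (1 + r * z))) 0 1 = f 1 := by
    have hdiff : DiffContOnCl ℂ (fun z => f ((1 - r * z) / (1 + r * z))) (Metric.ball 0 |1|) := by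
      refine DifferentiableOn.diffContOnCl fun z hz => ?_
      have hz : ‖r * z‖ < 1 := hnorm <| by
        simpa using Metric.closure_ball_subset_closedBall hz
      have hden : 1 + r * z ≠ 0 := fun h => by simp [eq_neg_of_add_eq_zero_right h] at hz
      have hf' := hf.differentiableAt (hopen.mem_nhds (re_one_sub_div_one_add_pos hz))
      exact (hf'.comp z (by fun_prop (disch := assumption))).differentiableWithinAt
    simpa using hdiff.circleAverage
  rw [← hmean, ← circleAverage_zero_one_congr_inv, circleAverage_eq_integral_cauchyMeasure]
  congr! 3 with x
  have h₁ : (1 + x * I : ℂ) ≠ 0 := fun h => by simpa using congrArg re h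
  have h₂ : (1 + ε : ℂ) ≠ 0 := by exact_mod_cast (by positivity : 1 + ε ≠ 0)
  have hnum : 1 - r * ((1 - x * I) / (1 + x * I)) =
      2 * (ε + x * I) / ((1 + ε) * (1 + x * I)) := by rw [hr]; push_cast; field_simp; ring
  have hden : 1 + r * ((1 - x * I) / (1 + x * I)) =
      2 * (1 + ε * x * I) / ((1 + ε) * (1 + x * I)) := by rw [hr]; push_cast; field_simp; ring
  rw [inv_div, hnum, hden, div_div_div_cancel_right₀ (mul_ne_zero h₂ h₁),
    mul_div_mul_left _ _ two_ne_zero]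

theorem integral_cauchyMeasure_zero_one_eq_of_norm_le {a C : ℝ} (ha₀ : 0 ≤ a) (ha : a < 1)
    (hf : DiffContOnCl ℂ f {z | 0 < z.re}) (hC : ∀ z, 0 < z.re → ‖f z‖ ≤ C * (1 + ‖z‖) ^ a) :
    ∫ x : ℝ, f (x * I) ∂cauchyMeasure 0 1 = f 1 := by
  have hC₀ : 0 ≤ C := nonneg_of_mul_nonneg_left ((norm_nonneg _).trans (hC 1 (by simp)))
    (by positivity)
  have hlim : Tendsto (fun ε : ℝ => ∫ x : ℝ, f ((ε + x * I) / (1 + ε * x * I)) ∂cauchyMeasure 0 1)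
      (𝓝[>] 0) (𝓝 (∫ x : ℝ, f (x * I) ∂cauchyMeasure 0 1)) := by
    refine tendsto_integral_filter_of_dominated_convergence
      (fun x => C * (2 * (1 + |x|)) ^ a) ?_ ?_ ?_ ?_
    · filter_upwards [self_mem_nhdsWithin] with ε (hε : 0 < ε)
      refine (hf.differentiableOn.continuousOn.comp_continuous ?_
        (re_add_mul_I_div_one_add_mul_I_pos hε)).aestronglyMeasurable
      exact .div (by fun_prop) (by fun_prop) fun x h => by simpa using congrArg re h
    · filter_upwards [Ioc_mem_nhdsGT one_pos] with ε hε
      refine .of_forall fun x => (hC _ (re_add_mul_I_div_one_add_mul_I_pos hε.1 x)).trans ?_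
      gcongr
      linarith [norm_add_mul_I_div_one_add_mul_I_le hε.1 hε.2 x, abs_nonneg x]
    · simp_rw [mul_rpow zero_le_two (add_nonneg zero_le_one (abs_nonneg _))]
      exact ((integrable_one_add_abs_rpow_cauchyMeasure ha).const_mul _).const_mul C
    · refine .of_forall fun x => ?_
      have hclosure : (x * I : ℂ) ∈ closure {z | 0 < z.re} := by simp
      refine (hf.continuousOn _ hclosure).tendsto.comp (tendsto_nhdsWithin_iff.2 ⟨?_, ?_⟩)
      · have hcont : ContinuousAt (fun ε : ℝ => (ε + x * I) / (1 + ε * x * I)) 0 :=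
          .div (by fun_prop) (by fun_prop) (by simp)
        simpa using hcont.tendsto.mono_left nhdsWithin_le_nhds
      · filter_upwards [self_mem_nhdsWithin] with ε hε
        exact subset_closure (re_add_mul_I_div_one_add_mul_I_pos hε x)
  refine tendsto_nhds_unique hlim (tendsto_const_nhds.congr' ?_)
  filter_upwards [self_mem_nhdsWithin] with ε hε
  exact (integral_cauchyMeasure_zero_one_eq_of_differentiableOn hε hf.differentiableOn).symm

theorem integral_cauchyMeasure_eq_of_norm_le {a C : ℝ} (ha₀ : 0 ≤ a) (ha : a < 1)
    (hf : DiffContOnCl ℂ f {z | 0 < z.re}) (hC : ∀ z, 0 < z.re → ‖f z‖ ≤ C * (1 + ‖z‖) ^ a)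
    (x₀ : ℝ) {γ : ℝ≥0} (hγ : γ ≠ 0) :
    ∫ x : ℝ, f (x * I) ∂cauchyMeasure x₀ γ = f (γ + x₀ * I) := by
  have hγ' : (0 : ℝ) < γ := by exact_mod_cast hγ.bot_lt
  have hC₀ : 0 ≤ C := nonneg_of_mul_nonneg_left ((norm_nonneg _).trans (hC 1 (by simp)))
    (by positivity)
  have hmaps : MapsTo (fun z : ℂ => γ * z + x₀ * I) {z | 0 < z.re} {z | 0 < z.re} := fun z hz => by
    simpa using mul_pos hγ' hz
  have hdiff : Differentiable ℂ fun z : ℂ => γ * z + x₀ * I := by fun_prop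
  rw [integral_cauchyMeasure_eq_integral_add_mul x₀ hγ]
  convert integral_cauchyMeasure_zero_one_eq_of_norm_le (C := C * (1 + γ + |x₀|) ^ a) ha₀ ha
    (hf.comp hdiff.diffContOnCl hmaps) fun z hz => (hC _ (hmaps hz)).trans ?_ using 2
  · ext x
    simp only [Function.comp_apply]
    push_cast
    ring_nf
  · simp
  · rw [mul_assoc, ← mul_rpow (by positivity) (by positivity)]
    have hnorm : ‖γ * z + x₀ * I‖ ≤ γ * ‖z‖ + |x₀| := (norm_add_le _ _).trans (by simp)
    gcongr
    nlinarith [norm_nonneg z, abs_nonneg x₀]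

end MeanValue

end CauchyMeasure
section Score

open Complex ComplexConjugate ProbabilityTheory Set

/-- The function `w(s) = digamma 2 - log s`, for which the Laplace transform of `t (log t)ⁿ` at `s`
is `w(s)ⁿ / s²` when `n = 0, 1`. -/
noncomputable def logFactor (s : ℂ) : ℂ := digamma 2 - log s

/-- The Cayley transform from the right half-plane onto the unit disc, normalized to vanish at
`s = 2` and to map the line `re s = 1` to the unit circle. -/
noncomputable def cayley (s : ℂ) : ℂ := (2 - s) / s

/-- The constant `cᵢ` in `ψᵢ(t) = cᵢ t (log t)ⁿ` for `t > 0`, with `n = psiLogDegree i`. -/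
noncomputable def psiCoeff : Fin 4 → ℂ := ![I, -1, -1, -I * (2 / Real.pi)]

/-- The exponent `n` in `ψᵢ(t) = cᵢ t (log t)ⁿ` for `t > 0`. -/
def psiLogDegree : Fin 4 → ℕ := ![0, 0, 1, 1]

/-- The complex score `cᵢ z wⁿ` at `s = 1 + ix`: its real part is the score `fᵢ / f` of the Cauchy
model in the direction of the `i`-th parameter. -/
noncomputable def complexScore (i : Fin 4) (x : ℝ) : ℂ :=
  psiCoeff i * (cayley (1 + x * I) * logFactor (1 + x * I) ^ psiLogDegree i)

theorem psiLogDegree_le_one (i : Fin 4) : psiLogDegree i ≤ 1 := by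
  fin_cases i <;> simp [psiLogDegree]

theorem psiC_of_pos (i : Fin 4) {t : ℝ} (ht : 0 < t) :
    psiC i t = psiCoeff i * (t * Real.log t ^ psiLogDegree i) := by
  fin_cases i <;> simp [psiC, psiCoeff, psiLogDegree, abs_of_pos ht]
  ring

theorem psiC_neg (i : Fin 4) (t : ℝ) : psiC i (-t) = conj (psiC i t) := by
  fin_cases i <;> simp [psiC, map_ofNat]

theorem hasMellin_log_pow_smul_cexp_neg_mul_two {s : ℂ} (hs : 0 < s.re) {n : ℕ} (hn : n ≤ 1) :
    HasMellin (fun t : ℝ => Real.log t ^ n • cexp (-(s * t))) 2 (logFactor s ^ n / s ^ 2) := by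
  have hcpow : s ^ (-2 : ℂ) = (s ^ 2)⁻¹ := by rw [cpow_neg, cpow_ofNat]
  interval_cases n
  · simpa [hcpow] using hasMellin_cexp_neg_mul (a := 2) (by simp) hs
  · simpa [hcpow, logFactor, div_eq_inv_mul] using
      hasMellin_log_smul_cexp_neg_mul (a := 2) (by simp) hs

theorem re_integral_eq_two_mul_re_integral_Ioi {g : ℝ → ℂ} (hg : ∀ t, g (-t) = conj (g t))
    (hint : IntegrableOn g (Ioi 0)) : (∫ t, g t).re = 2 * (∫ t in Ioi 0, g t).re := by
  have hconj : IntegrableOn (fun t => g (-t)) (Ioi 0) := by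
    simp only [hg]
    exact conjCLE.toContinuousLinearMap.integrable_comp hint
  have hIic : IntegrableOn g (Iic 0) := by
    simpa using ((integrableOn_Ici_iff_integrableOn_Ioi (by finiteness)).2 hconj).comp_neg
  have hneg : ∫ t in Iic 0, g t = conj (∫ t in Ioi 0, g t) := by
    simpa [hg, integral_conj] using (integral_comp_neg_Ioi 0 g).symm
  rw [← intervalIntegral.integral_Iic_add_Ioi hIic hint, hneg, add_re, conj_re, two_mul]

theorem inv_one_add_mul_I_sq (x : ℝ) :
    ((1 + x * I) ^ 2)⁻¹ = ((1 + x ^ 2)⁻¹ : ℝ) * cayley (1 + x * I) := by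
  have h₁ : (1 + x * I : ℂ) ≠ 0 := fun h => by simpa using congrArg re h
  have h₂ : (1 + x ^ 2 : ℂ) ≠ 0 := by exact_mod_cast (by positivity : 1 + x ^ 2 ≠ 0)
  rw [cayley]
  push_cast
  field_simp
  linear_combination (x ^ 2 : ℂ) * I_sq

theorem fPc_eq (i : Fin 4) (x : ℝ) : fPc i x = cauchyPDFReal 0 1 x * (complexScore i x).re := by
  obtain ⟨hconv, hmellin⟩ := hasMellin_log_pow_smul_cexp_neg_mul_two (s := 1 + x * I) (by simp)
    (psiLogDegree_le_one i)
  have hpos (t : ℝ) (ht : t ∈ Ioi (0 : ℝ)) :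
      psiCoeff i * ((t : ℂ) ^ (2 - 1 : ℂ) • (Real.log t ^ psiLogDegree i •
        cexp (-((1 + x * I) * t)))) = cexp (-I * t * x) * psiC i t * cexp ((-|t| : ℝ)) := by
    have hexp : cexp (-((1 + x * I) * t)) = cexp (-I * t * x) * cexp ((-t : ℝ)) := by
      rw [← Complex.exp_add]; push_cast; ring_nf
    rw [psiC_of_pos i ht, hexp, abs_of_pos ht]
    norm_num
    ring
  rw [fPc, re_integral_eq_two_mul_re_integral_Ioi, ← setIntegral_congr_fun measurableSet_Ioi hpos,
    integral_const_mul, ← mellin, hmellin]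
  · have hscore : psiCoeff i * (logFactor (1 + x * I) ^ psiLogDegree i / (1 + x * I) ^ 2) =
        ((1 + x ^ 2)⁻¹ : ℝ) * complexScore i x := by
      rw [div_eq_mul_inv _ ((1 + x * I : ℂ) ^ 2), inv_one_add_mul_I_sq, complexScore]
      ring
    rw [hscore, re_ofReal_mul, cauchyPDFReal_zero_one]
    ring
  · intro t
    simp [psiC_neg, ← Complex.exp_conj]
  · exact IntegrableOn.congr_fun (hconv.const_mul _) hpos measurableSet_Ioi

theorem IC_eq_integral_re_mul_re (i j : Fin 4) :
    IC i j = ∫ x, (complexScore i x).re * (complexScore j x).re ∂cauchyMeasure 0 1 := by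
  rw [IC, integral_cauchyMeasure 0 one_ne_zero, ← integral_const_mul]
  congr with x
  rw [fPc_eq, fPc_eq, cauchyPDFReal_zero_one, smul_eq_mul]
  have : 1 + x ^ 2 ≠ 0 := by positivity
  field_simp

theorem continuous_cayley_one_add_mul_I : Continuous fun x : ℝ => cayley (1 + x * I) :=
  .div (by fun_prop) (by fun_prop) fun x h => by simpa using congrArg re h

theorem continuous_logFactor_one_add_mul_I : Continuous fun x : ℝ => logFactor (1 + x * I) :=
  continuous_const.sub (.clog (by fun_prop) fun x => .inl (by simp))

theorem differentiableAt_cayley {s : ℂ} (hs : s ≠ 0) : DifferentiableAt ℂ cayley s :=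
  .div (by fun_prop) differentiableAt_id hs

theorem differentiableAt_logFactor {s : ℂ} (hs : s ∈ slitPlane) :
    DifferentiableAt ℂ logFactor s :=
  (differentiableAt_const _).sub (differentiableAt_id.clog hs)

theorem cayley_two : cayley 2 = 0 := by simp [cayley]

theorem norm_cayley_le_one {s : ℂ} (hs : 1 ≤ s.re) : ‖cayley s‖ ≤ 1 := by
  rw [cayley, norm_div]
  refine div_le_one_of_le₀ ?_ (norm_nonneg s)
  rw [norm_def, norm_def]
  refine Real.sqrt_le_sqrt ?_
  simp only [normSq_apply, sub_re, sub_im, re_ofNat, im_ofNat]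
  linarith

theorem norm_cayley_one_add_mul_I (x : ℝ) : ‖cayley (1 + x * I)‖ = 1 := by
  have hne : (1 + x * I : ℂ) ≠ 0 := fun h => by simpa using congrArg re h
  have hconj : 2 - (1 + x * I) = conj (1 + x * I : ℂ) := by
    simp only [map_add, map_mul, map_one, conj_ofReal, conj_I]
    ring
  rw [cayley, hconj, norm_div, norm_conj, div_self (norm_ne_zero_iff.2 hne)]

theorem norm_logFactor_le {s : ℂ} (hs : 1 ≤ ‖s‖) :
    ‖logFactor s‖ ≤ ‖digamma 2‖ + Real.pi + Real.log ‖s‖ := by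
  have hlog : ‖log s‖ ≤ Real.log ‖s‖ + Real.pi := by
    refine (norm_le_abs_re_add_abs_im _).trans ?_
    rw [log_re, log_im, abs_of_nonneg (Real.log_nonneg hs)]
    gcongr
    exact abs_arg_le_pi s
  rw [logFactor]
  linarith [norm_sub_le (digamma 2) (log s)]

theorem exists_norm_logFactor_pow_le (m : ℕ) {ε : ℝ} (hε : 0 < ε) :
    ∃ C, 0 ≤ C ∧ ∀ s : ℂ, 1 ≤ ‖s‖ → ‖logFactor s‖ ^ m ≤ C * ‖s‖ ^ ε := by
  set K := ‖digamma 2‖ + Real.pi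
  refine ⟨m.factorial * Real.exp (ε * K) / ε ^ m, by positivity, fun s hs => ?_⟩
  have hexp : (ε * ‖logFactor s‖) ^ m ≤ Real.exp (ε * ‖logFactor s‖) * m.factorial :=
    (div_le_iff₀ (by positivity)).1 (Real.pow_div_factorial_le_exp _ (by positivity) m)
  rw [div_mul_eq_mul_div, le_div_iff₀ (by positivity)]
  calc ‖logFactor s‖ ^ m * ε ^ m = (ε * ‖logFactor s‖) ^ m := by rw [mul_pow, mul_comm]
    _ ≤ Real.exp (ε * ‖logFactor s‖) * m.factorial := hexp
    _ ≤ Real.exp (ε * (K + Real.log ‖s‖)) * m.factorial := by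
        gcongr
        exact norm_logFactor_le hs
    _ = m.factorial * Real.exp (ε * K) * ‖s‖ ^ ε := by
        rw [mul_add, Real.exp_add, Real.rpow_def_of_pos (by positivity), mul_comm (Real.log _)]
        ring

theorem integrable_norm_logFactor_pow (m : ℕ) :
    Integrable (fun x : ℝ => ‖logFactor (1 + x * I)‖ ^ m) (cauchyMeasure 0 1) := by
  obtain ⟨C, hC₀, hC⟩ := exists_norm_logFactor_pow_le m one_half_pos
  refine ((integrable_one_add_abs_rpow_cauchyMeasure one_half_lt_one).const_mul C).mono'
    (continuous_logFactor_one_add_mul_I.norm.pow m).aestronglyMeasurable (.of_forall fun x => ?_)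
  have hge : 1 ≤ ‖1 + x * I‖ := by simpa using abs_re_le_norm (1 + x * I)
  have hle : ‖1 + x * I‖ ≤ 1 + |x| := (norm_add_le _ _).trans (by simp)
  rw [norm_pow, norm_norm]
  refine (hC _ hge).trans ?_
  gcongr

theorem integrable_cayley_pow_mul_logFactor_pow (n m : ℕ) :
    Integrable (fun x : ℝ => cayley (1 + x * I) ^ n * logFactor (1 + x * I) ^ m)
      (cauchyMeasure 0 1) :=
  (integrable_norm_logFactor_pow m).mono' ((continuous_cayley_one_add_mul_I.pow n).mul
    (continuous_logFactor_one_add_mul_I.pow m)).aestronglyMeasurable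
    (.of_forall fun x => by simp [norm_cayley_one_add_mul_I])

theorem integrable_logFactor_pow_mul_conj_logFactor_pow (m n : ℕ) :
    Integrable (fun x : ℝ => logFactor (1 + x * I) ^ m * conj (logFactor (1 + x * I)) ^ n)
      (cauchyMeasure 0 1) :=
  (integrable_norm_logFactor_pow (m + n)).mono' ((continuous_logFactor_one_add_mul_I.pow m).mul
    (continuous_conj.comp continuous_logFactor_one_add_mul_I |>.pow n)).aestronglyMeasurable
    (.of_forall fun x => by simp [pow_add])

theorem integral_cayley_pow_mul_logFactor_pow (n m : ℕ) :
    ∫ x : ℝ, cayley (1 + x * I) ^ n * logFactor (1 + x * I) ^ m ∂cauchyMeasure 0 1 =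
      0 ^ n * logFactor 2 ^ m := by
  obtain ⟨C, hC₀, hC⟩ := exists_norm_logFactor_pow_le m one_half_pos
  have hdiff : DiffContOnCl ℂ (fun z => cayley (1 + z) ^ n * logFactor (1 + z) ^ m)
      {z | 0 < z.re} := by
    refine DifferentiableOn.diffContOnCl fun z hz => ?_
    have hre : 0 ≤ z.re := by simpa using hz
    have hslit : 1 + z ∈ slitPlane := .inl (by rw [add_re, one_re]; positivity)
    have hcayley : DifferentiableAt ℂ (fun z => cayley (1 + z)) z :=
      (differentiableAt_cayley (slitPlane_ne_zero hslit)).comp z (by fun_prop)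
    have hlogFactor : DifferentiableAt ℂ (fun z => logFactor (1 + z)) z :=
      (differentiableAt_logFactor hslit).comp z (by fun_prop)
    exact ((hcayley.pow n).mul (hlogFactor.pow m)).differentiableWithinAt
  have hmean := integral_cauchyMeasure_eq_of_norm_le (a := 1 / 2) (C := C) one_half_pos.le
    one_half_lt_one hdiff (fun z hz => ?_) 0 one_ne_zero
  · simpa [one_add_one_eq_two, cayley_two] using hmean
  have hre : 1 ≤ (1 + z).re := by simpa using hz.le
  have hnorm : 1 ≤ ‖1 + z‖ := hre.trans (re_le_norm _)
  have hle : ‖1 + z‖ ≤ 1 + ‖z‖ := (norm_add_le _ _).trans (by simp)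
  calc ‖cayley (1 + z) ^ n * logFactor (1 + z) ^ m‖
      = ‖cayley (1 + z)‖ ^ n * ‖logFactor (1 + z)‖ ^ m := by rw [norm_mul, norm_pow, norm_pow]
    _ ≤ 1 * (C * ‖1 + z‖ ^ (1 / 2 : ℝ)) := by
        gcongr
        · exact pow_le_one₀ (norm_nonneg _) (norm_cayley_le_one hre)
        · exact hC _ hnorm
    _ ≤ C * (1 + ‖z‖) ^ (1 / 2 : ℝ) := by rw [one_mul]; gcongr

theorem complexScore_re_mul_re (i j : Fin 4) (x : ℝ) :
    (complexScore i x).re * (complexScore j x).re =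
      1 / 2 * (psiCoeff i * psiCoeff j * (cayley (1 + x * I) ^ 2 *
          logFactor (1 + x * I) ^ (psiLogDegree i + psiLogDegree j)) +
        psiCoeff i * conj (psiCoeff j) * (logFactor (1 + x * I) ^ psiLogDegree i *
          conj (logFactor (1 + x * I)) ^ psiLogDegree j)).re := by
  have hre_mul_re (a b : ℂ) : a.re * b.re = 1 / 2 * (a * b + a * conj b).re := by
    simp only [add_re, mul_re, conj_re, conj_im]
    ring
  have hunit : cayley (1 + x * I) * conj (cayley (1 + x * I)) = 1 := by
    simp [mul_conj, normSq_eq_norm_sq, norm_cayley_one_add_mul_I]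
  rw [hre_mul_re, complexScore, complexScore]
  congr 2
  simp only [map_mul, map_pow]
  linear_combination psiCoeff i * conj (psiCoeff j) * (logFactor (1 + x * I) ^ psiLogDegree i *
    conj (logFactor (1 + x * I)) ^ psiLogDegree j) * hunit

theorem IC_eq_re_integral (i j : Fin 4) :
    IC i j = 1 / 2 * (psiCoeff i * conj (psiCoeff j) *
      ∫ x : ℝ, logFactor (1 + x * I) ^ psiLogDegree i *
        conj (logFactor (1 + x * I)) ^ psiLogDegree j ∂cauchyMeasure 0 1).re := by
  have hholo := (integrable_cayley_pow_mul_logFactor_pow 2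
    (psiLogDegree i + psiLogDegree j)).const_mul (psiCoeff i * psiCoeff j)
  have hmixed := (integrable_logFactor_pow_mul_conj_logFactor_pow (psiLogDegree i)
    (psiLogDegree j)).const_mul (psiCoeff i * conj (psiCoeff j))
  simp_rw [IC_eq_integral_re_mul_re, complexScore_re_mul_re]
  rw [integral_const_mul]
  refine congrArg _ ((integral_re (hholo.add hmixed)).trans ?_)
  rw [integral_add' hholo hmixed, integral_const_mul, integral_const_mul,
    integral_cayley_pow_mul_logFactor_pow, zero_pow two_ne_zero, zero_mul, mul_zero, zero_add,
    RCLike.re_to_complex]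

theorem logFactor_two :
    logFactor 2 = ((1 - Real.eulerMascheroniConstant - Real.log 2 : ℝ) : ℂ) := by
  rw [logFactor, digamma_two]
  simp

theorem integral_logFactor_pow (m : ℕ) :
    ∫ x : ℝ, logFactor (1 + x * I) ^ m ∂cauchyMeasure 0 1 = logFactor 2 ^ m := by
  simpa using integral_cayley_pow_mul_logFactor_pow 0 m

theorem integral_conj_logFactor :
    ∫ x : ℝ, conj (logFactor (1 + x * I)) ∂cauchyMeasure 0 1 = logFactor 2 := by
  have h := integral_logFactor_pow 1
  simp only [pow_one] at h
  rw [integral_conj, h, logFactor_two, conj_ofReal]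

theorem logFactor_one_add_mul_I_im (x : ℝ) : (logFactor (1 + x * I)).im = -Real.arctan x := by
  have harg : arg (1 + x * I) = Real.arctan x := by
    rw [arg_of_re_nonneg (by simp), Real.arctan_eq_arcsin]
    simp [norm_def, normSq_apply, sq]
  simp [logFactor, digamma_two, log_im, harg]

theorem integral_arctan_sq_cauchyMeasure :
    ∫ x, Real.arctan x ^ 2 ∂cauchyMeasure 0 1 = Real.pi ^ 2 / 12 := by
  have hpi := Real.pi_pos
  have hcongr : ∫ θ in -(Real.pi / 2)..Real.pi / 2, Real.arctan (Real.tan θ) ^ 2 =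
      ∫ θ in -(Real.pi / 2)..Real.pi / 2, θ ^ 2 :=
    intervalIntegral.integral_congr_Ioo_of_le (by linarith) fun θ hθ => by
      simp only [Real.arctan_tan hθ.1 hθ.2]
  rw [integral_cauchyMeasure_eq_integral_tan 0 one_ne_zero]
  simp only [NNReal.coe_one, one_mul, zero_add, hcongr, integral_pow, smul_eq_mul]
  field_simp
  ring

theorem integral_logFactor_mul_conj_logFactor :
    ∫ x : ℝ, logFactor (1 + x * I) * conj (logFactor (1 + x * I)) ∂cauchyMeasure 0 1 =
      ((Real.pi ^ 2 / 6 + (Real.eulerMascheroniConstant + Real.log 2 - 1) ^ 2 : ℝ) : ℂ) := by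
  have hsq (x : ℝ) : logFactor (1 + x * I) * conj (logFactor (1 + x * I)) =
      (((logFactor (1 + x * I) ^ 2).re + 2 * Real.arctan x ^ 2 : ℝ) : ℂ) := by
    rw [mul_conj, ← neg_sq (Real.arctan x), ← logFactor_one_add_mul_I_im, normSq_apply, sq, mul_re]
    congr 1
    ring
  have hint : Integrable (fun x : ℝ => logFactor (1 + x * I) ^ 2) (cauchyMeasure 0 1) := by
    simpa using integrable_cayley_pow_mul_logFactor_pow 0 2
  have hre : ∫ x : ℝ, (logFactor (1 + x * I) ^ 2).re ∂cauchyMeasure 0 1 =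
      (∫ x : ℝ, logFactor (1 + x * I) ^ 2 ∂cauchyMeasure 0 1).re := integral_re hint
  have harctan : Integrable (fun x => Real.arctan x ^ 2) (cauchyMeasure 0 1) :=
    .of_bound (by fun_prop) ((Real.pi / 2) ^ 2) (.of_forall fun x => by
      rw [norm_pow, Real.norm_eq_abs]
      gcongr
      exact abs_le.2 ⟨(Real.neg_pi_div_two_lt_arctan x).le, (Real.arctan_lt_pi_div_two x).le⟩)
  have hre_int : Integrable (fun x : ℝ => (logFactor (1 + x * I) ^ 2).re) (cauchyMeasure 0 1) :=
    hint.re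
  simp_rw [hsq]
  rw [integral_complex_ofReal, integral_add hre_int (harctan.const_mul 2), integral_const_mul,
    integral_arctan_sq_cauchyMeasure, hre, integral_logFactor_pow, logFactor_two]
  norm_cast
  ring

theorem IC_eq_of_psiLogDegree_zero_zero {i j : Fin 4} (hi : psiLogDegree i = 0)
    (hj : psiLogDegree j = 0) : IC i j = 1 / 2 * (psiCoeff i * conj (psiCoeff j)).re := by
  simp [IC_eq_re_integral, hi, hj]

theorem IC_eq_of_psiLogDegree_zero_one {i j : Fin 4} (hi : psiLogDegree i = 0)
    (hj : psiLogDegree j = 1) :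
    IC i j = 1 / 2 * (psiCoeff i * conj (psiCoeff j)).re *
      (1 - Real.eulerMascheroniConstant - Real.log 2) := by
  rw [IC_eq_re_integral, hi, hj, mul_assoc (1 / 2 : ℝ)]
  simp only [pow_zero, pow_one, one_mul, integral_conj_logFactor, logFactor_two, re_mul_ofReal]

theorem IC_eq_of_psiLogDegree_one_one {i j : Fin 4} (hi : psiLogDegree i = 1)
    (hj : psiLogDegree j = 1) :
    IC i j = 1 / 2 * (psiCoeff i * conj (psiCoeff j)).re *
      (Real.pi ^ 2 / 6 + (Real.eulerMascheroniConstant + Real.log 2 - 1) ^ 2) := by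
  rw [IC_eq_re_integral, hi, hj, mul_assoc (1 / 2 : ℝ)]
  simp only [pow_one, integral_logFactor_mul_conj_logFactor, re_mul_ofReal]

end Score
/-- Exact values of the Fisher information matrix at the Cauchy point
`(μ,σ,α,β) = (0,1,1,0)` (indices `0,1,2,3` for `μ,σ,α,β`; `γ` is Euler's constant):
`I_{μμ} = I_{σσ} = 1/2`, `I_{αα} = ½(π²/6 + (γ + log 2 − 1)²)`,
`I_{ββ} = (2/π²)(π²/6 + (γ + log 2 − 1)²)`, `I_{σα} = ½(1 − γ − log 2)`,
`I_{μβ} = (1/π)(γ + log 2 − 1)`, and `I_{μσ} = I_{μα} = I_{αβ} = I_{σβ} = 0`. -/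
theorem fisher_info_cauchy_exact :
    IC 0 0 = 1 / 2 ∧ IC 1 1 = 1 / 2 ∧
    IC 2 2 = (1 / 2) * (Real.pi ^ 2 / 6 +
      (Real.eulerMascheroniConstant + Real.log 2 - 1) ^ 2) ∧
    IC 3 3 = (2 / Real.pi ^ 2) * (Real.pi ^ 2 / 6 +
      (Real.eulerMascheroniConstant + Real.log 2 - 1) ^ 2) ∧
    IC 1 2 = (1 / 2) * (1 - Real.eulerMascheroniConstant - Real.log 2) ∧
    IC 0 3 = (1 / Real.pi) * (Real.eulerMascheroniConstant + Real.log 2 - 1) ∧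
    IC 0 1 = 0 ∧ IC 0 2 = 0 ∧ IC 2 3 = 0 ∧ IC 1 3 = 0 := by
  have hμβ : (psiCoeff 0 * (starRingEnd ℂ) (psiCoeff 3)).re = -(2 / Real.pi) := by simp [psiCoeff]
  have hββ : (psiCoeff 3 * (starRingEnd ℂ) (psiCoeff 3)).re = (2 / Real.pi) ^ 2 := by
    simp [psiCoeff, sq]
  refine ⟨(IC_eq_of_psiLogDegree_zero_zero rfl rfl).trans ?_,
    (IC_eq_of_psiLogDegree_zero_zero rfl rfl).trans ?_,
    (IC_eq_of_psiLogDegree_one_one rfl rfl).trans ?_,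
    (IC_eq_of_psiLogDegree_one_one rfl rfl).trans (by rw [hββ]; ring),
    (IC_eq_of_psiLogDegree_zero_one rfl rfl).trans ?_,
    (IC_eq_of_psiLogDegree_zero_one rfl rfl).trans (by rw [hμβ]; ring),
    (IC_eq_of_psiLogDegree_zero_zero rfl rfl).trans ?_,
    (IC_eq_of_psiLogDegree_zero_one rfl rfl).trans ?_,
    (IC_eq_of_psiLogDegree_one_one rfl rfl).trans ?_,
    (IC_eq_of_psiLogDegree_zero_one rfl rfl).trans ?_⟩ <;>
    simp [psiCoeff]
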